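/- arXiv:2603.21144 — 2 statements merged into one kernel-verified Lean document; each statement's English description precedes it below -/
import Mathlib

section
/- Let H be a real separable Hilbert space with Hilbert basis (e_k)_{k∈ℕ}, let a ∈ H, and let λ : ℕ → ℝ be a nonnegative summable sequence. Then there exists a unique probability measure μ on the Borel σ-algebra of H whose characteristic functional satisfies, for every h ∈ H, ∫_H exp(i⟨h,x⟩) dμ(x) = exp(i⟨a,h⟩) · exp(−(1/2) ∑_{k=0}^∞ λ_k ⟨h,e_k⟩²). -/
/-!
Uniqueness: a finite Borel measure on a separable Hilbert space is determined by its characteristic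
functional, which is `Measure.ext_of_charFun`.

Existence: on `ℕ → ℝ` with the product measure of the centred Gaussians of variance `lam k`, the
coordinates `ω k` are independent and `𝔼 ∑ (ω k)² = ∑ lam k < ∞`, so almost surely `ω` is square
summable and the series `∑ ω k • e k` converges in `H` to a random vector `X`
(`ae_summable_sq_gaussianProduct`, `exists_tendsto_sum_smul`). The required measure is the law of
`a + X`. Its characteristic functional is the limit, by dominated convergence, of those of the
partial sums, which independence reduces to a product of one-dimensional Gaussian characteristic
functions (`integral_exp_sum_gaussianProduct`).
-/

open MeasureTheory Complex
open scoped RealInnerProductSpace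

open ProbabilityTheory Filter Topology

/-- The law on `ℕ → ℝ` of independent centred Gaussian coordinates, the `k`-th of variance
`lam k`; negative values of `lam k` are truncated to zero. -/
noncomputable def gaussianProduct (lam : ℕ → ℝ) : Measure (ℕ → ℝ) :=
  Measure.infinitePi fun k => gaussianReal 0 (lam k).toNNReal

instance (lam : ℕ → ℝ) : IsProbabilityMeasure (gaussianProduct lam) := by
  unfold gaussianProduct; infer_instance

lemma separableSpace_of_hilbertBasis {H : Type*} [NormedAddCommGroup H] [InnerProductSpace ℝ H]
    (e : HilbertBasis ℕ ℝ H) : TopologicalSpace.SeparableSpace H := by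
  have h : TopologicalSpace.IsSeparable (Submodule.span ℝ (Set.range e) : Set H) :=
    (Set.countable_range e).isSeparable.span
  have h2 := h.closure
  rw [← Submodule.topologicalClosure_coe, e.dense_span] at h2
  exact TopologicalSpace.isSeparable_univ_iff.1 h2

/-- The left side is the characteristic function at `1` of a sum of independent variables `ω k * c k`,
each of which is centred Gaussian with variance `lam k * c k ^ 2`. -/
lemma integral_exp_sum_gaussianProduct (lam : ℕ → ℝ) (hlam : ∀ k, 0 ≤ lam k) (c : ℕ → ℝ)
    (n : ℕ) :
    ∫ ω, exp (I * ((∑ k ∈ Finset.range n, ω k * c k : ℝ) : ℂ)) ∂gaussianProduct lam =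
      exp (-(1 / 2 : ℂ) * ((∑ k ∈ Finset.range n, lam k * c k ^ 2 : ℝ) : ℂ)) := by
  have hind : iIndepFun (fun k (ω : ℕ → ℝ) => ω k * c k) (gaussianProduct lam) :=
    iIndepFun_infinitePi (X := fun k x => x * c k) (fun k => by fun_prop)
  have hfac (k : ℕ) : charFun ((gaussianProduct lam).map fun ω : ℕ → ℝ => ω k * c k) 1 =
      exp (-(1 / 2 : ℂ) * ((lam k * c k ^ 2 : ℝ) : ℂ)) := by
    have h1 : (gaussianProduct lam).map (fun ω : ℕ → ℝ => ω k * c k) =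
        (gaussianReal 0 (lam k).toNNReal).map (fun x => x * c k) := by
      rw [← Measure.infinitePi_map_eval (fun k => gaussianReal 0 (lam k).toNNReal) k,
        Measure.map_map (by fun_prop) (by fun_prop)]
      rfl
    rw [h1, gaussianReal_map_mul_const, charFun_gaussianReal]
    congr 1
    simp [Real.coe_toNNReal _ (hlam k)]
    ring
  have h := congrFun (iIndepFun.charFun_map_finsetSum_eq_prod (s := Finset.range n)
    (P := gaussianProduct lam) (X := fun k (ω : ℕ → ℝ) => ω k * c k)
    (fun k _ => Measurable.aemeasurable (by fun_prop))
    (hind.precomp (g := ((↑) : Finset.range n → ℕ)) Subtype.val_injective)) 1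
  rw [charFun_apply, integral_map (by fun_prop) (by fun_prop), Finset.prod_apply] at h
  simp_rw [hfac] at h
  rw [← Complex.exp_sum, ← Finset.mul_sum, ← Complex.ofReal_sum] at h
  rw [← h]
  refine integral_congr_ae (ae_of_all _ fun ω => ?_)
  simp [mul_comm]

lemma ae_summable_sq_gaussianProduct (lam : ℕ → ℝ) (hlam : ∀ k, 0 ≤ lam k)
    (hs : Summable lam) : ∀ᵐ ω ∂gaussianProduct lam, Summable fun k => ω k ^ 2 := by
  have hk (k : ℕ) : ∫⁻ ω, ENNReal.ofReal (ω k ^ 2) ∂gaussianProduct lam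
      = ENNReal.ofReal (lam k) := by
    have hmp : MeasurePreserving (fun ω : ℕ → ℝ => ω k) (gaussianProduct lam)
      (gaussianReal 0 (lam k).toNNReal) :=
        measurePreserving_eval_infinitePi (fun k => gaussianReal 0 (lam k).toNNReal) k
    rw [hmp.lintegral_comp (f := fun x => ENNReal.ofReal (x ^ 2)) (by fun_prop),
      ← ofReal_integral_eq_lintegral_ofReal (f := fun x : ℝ => x ^ 2)
        (memLp_id_gaussianReal 2).integrable_sq
        (ae_of_all _ fun x => sq_nonneg _)]
    congr 1
    have hv := variance_fun_id_gaussianReal (μ := 0) (v := (lam k).toNNReal)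
    rw [variance_eq_integral measurable_id'.aemeasurable] at hv
    simpa [integral_id_gaussianReal, Real.coe_toNNReal _ (hlam k)] using hv
  have hfin : ∫⁻ ω, ∑' k, ENNReal.ofReal (ω k ^ 2) ∂gaussianProduct lam ≠ ⊤ := by
    rw [lintegral_tsum (fun k => Measurable.aemeasurable (by fun_prop))]
    simp_rw [hk]
    exact hs.tsum_ofReal_ne_top
  filter_upwards [ae_lt_top (by fun_prop) hfin] with ω hω
  have := ENNReal.summable_toReal hω.ne
  simpa [ENNReal.toReal_ofReal, sq_nonneg] using this

lemma exists_tendsto_sum_smul {H : Type*} [NormedAddCommGroup H] [InnerProductSpace ℝ H]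
    (e : HilbertBasis ℕ ℝ H) {w : ℕ → ℝ} (hw : Summable fun k => w k ^ 2) :
    ∃ x : H, Tendsto (fun n => ∑ k ∈ Finset.range n, w k • e k) atTop (𝓝 x) := by
  have hmem : Memℓp w 2 := memℓp_gen (by simpa using hw)
  exact ⟨_, (e.hasSum_repr_symm ⟨w, hmem⟩).tendsto_sum_nat⟩

/-- Existence and uniqueness of the Gaussian measure `μ_{a,R}` on a real
separable Hilbert space `H`, with mean `a` and covariance operator diagonal in the Hilbert
basis `(e k)` with nonnegative summable eigenvalues `(λ k)`, characterized by its
characteristic functional. -/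
theorem gaussian_measure_exists_unique
    (H : Type*) [NormedAddCommGroup H] [InnerProductSpace ℝ H] [CompleteSpace H]
    [MeasurableSpace H] [BorelSpace H]
    (e : HilbertBasis ℕ ℝ H) (a : H) (lam : ℕ → ℝ)
    (hlam_nonneg : ∀ k, 0 ≤ lam k) (hlam_summable : Summable lam) :
    ∃! μ : Measure H, IsProbabilityMeasure μ ∧
      ∀ h : H,
        ∫ x, Complex.exp (Complex.I * (⟪h, x⟫ : ℝ)) ∂μ =
          Complex.exp (Complex.I * (⟪a, h⟫ : ℝ)) *
            Complex.exp (-(1 / 2 : ℂ) * ((∑' k, lam k * ⟪h, e k⟫ ^ 2 : ℝ) : ℂ)) := by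
  have : TopologicalSpace.SeparableSpace H := separableSpace_of_hilbertBasis e
  have : SecondCountableTopology H := UniformSpace.secondCountable_of_separable H
  refine existsUnique_of_exists_of_unique ?_ ?_
  · obtain ⟨X, hX, hlim⟩ := measurable_limit_of_tendsto_metrizable_ae
      (μ := gaussianProduct lam) (L := atTop)
      (f := fun n (ω : ℕ → ℝ) => ∑ k ∈ Finset.range n, ω k • e k)
      (fun n => Measurable.aemeasurable (by fun_prop))
      ((ae_summable_sq_gaussianProduct lam hlam_nonneg hlam_summable).mono
        fun ω hω => exists_tendsto_sum_smul e hω)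
    refine ⟨(gaussianProduct lam).map fun ω => a + X ω,
      Measure.isProbabilityMeasure_map (by fun_prop), fun h => ?_⟩
    rw [integral_map (by fun_prop) (by fun_prop)]
    simp_rw [inner_add_right, Complex.ofReal_add, mul_add, Complex.exp_add]
    rw [integral_const_mul, real_inner_comm]
    congr 1
    have hsum : Summable fun k => lam k * ⟪h, e k⟫ ^ 2 := by
      refine Summable.of_nonneg_of_le (fun k => mul_nonneg (hlam_nonneg k) (sq_nonneg _))
        (fun k => mul_le_mul_of_nonneg_left ?_ (hlam_nonneg k))
        (hlam_summable.mul_right (‖h‖ ^ 2))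
      have := abs_real_inner_le_norm h (e k)
      rw [e.orthonormal.1 k, mul_one] at this
      exact sq_le_sq.2 (by simpa using this)
    have hR : Tendsto (fun n => exp (-(1 / 2 : ℂ) *
        ((∑ k ∈ Finset.range n, lam k * ⟪h, e k⟫ ^ 2 : ℝ) : ℂ))) atTop
        (𝓝 (exp (-(1 / 2 : ℂ) * ((∑' k, lam k * ⟪h, e k⟫ ^ 2 : ℝ) : ℂ)))) :=
      ((by fun_prop : Continuous fun t : ℝ => exp (-(1 / 2 : ℂ) * (t : ℂ))).tendsto _).comp
        hsum.hasSum.tendsto_sum_nat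
    simp_rw [← integral_exp_sum_gaussianProduct lam hlam_nonneg] at hR
    refine tendsto_nhds_unique ?_ hR
    refine tendsto_integral_of_dominated_convergence (fun _ => 1)
      (fun n => Measurable.aestronglyMeasurable (by fun_prop))
      (integrable_const _) (fun n => ae_of_all _ fun ω => ?_) ?_
    · rw [mul_comm, Complex.norm_exp_ofReal_mul_I]
    · filter_upwards [hlim] with ω hω
      have := ((by fun_prop : Continuous fun x : H => exp (I * (⟪h, x⟫ : ℝ))).tendsto _).comp hω
      simpa [Function.comp_def, inner_sum, inner_smul_right] using this
  · rintro μ ν ⟨hμ, hμ'⟩ ⟨hν, hν'⟩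
    refine Measure.ext_of_charFun (funext fun h => ?_)
    simpa [charFun_apply, mul_comm, real_inner_comm] using (hμ' h).trans (hν' h).symm
end

section
/- Let d ≥ 1, σ² ≥ 0. Let φ : [0,∞) → ℝ be continuous, infinitely differentiable on (0,∞) with (−1)^n φ^{(n)}(u) ≥ 0 for all n ∈ ℕ and u > 0 (φ completely monotone), and let ψ : [0,∞) → ℝ be strictly positive, continuous, differentiable on (0,∞) with derivative ψ' completely monotone on (0,∞). Then the Gneiting spatiotemporal kernel C(z, τ) = σ² · ψ(τ²)^{−d/2} · φ(‖z‖² / ψ(τ²)) is a positive-semidefinite kernel on ℝ^d × ℝ: for every finite family of points (z_1,t_1), …, (z_m,t_m) in ℝ^d × ℝ and reals c_1, …, c_m, ∑_{i=1}^m ∑_{j=1}^m c_i c_j C(z_i − z_j, t_i − t_j) ≥ 0. -/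
open Set

/-!
It suffices to treat `φ u = exp (-r u)`, because a completely monotone function is a pointwise limit
of series of such exponentials with nonnegative coefficients, and pointwise limits of positive
semidefinite matrices are positive semidefinite. No representing measure is needed.

A nonnegative function `f` on `[0, a)` all of whose derivatives are nonnegative is the sum of its
Taylor series at `0` (`hasSum_taylor_of_nonneg`). For `φ` completely monotone, apply this to
`y ↦ φ (N - y)` at `y = N exp (-(u + 1/N)/N)`: the powers `y ^ k` are exponentials in `u`, so
`φ (N - y)` is a series `∑ cₖ exp (-rₖ u)` with `cₖ, rₖ ≥ 0` (`hasSum_exp_of_cm`). Since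
`N - y → u` as `N → ∞`, continuity gives `φ u` as a pointwise limit of such series. When only `ψ'` is
completely monotone, the same argument for `y ↦ ψ N - ψ (N - y)` presents `ψ N - ψ (N - y)` as such
a series (`hasSum_exp_of_bernstein`).

At `u = (tᵢ - tⱼ)²` each exponential is a positive semidefinite matrix; by the Schur product
theorem the entrywise exponential preserves positive semidefiniteness, hence `exp (-s ψ((tᵢ - tⱼ)²))`
is positive semidefinite for all `s ≥ 0` (`psd_exp_neg_bernstein`). With
`p = ψ((tᵢ - tⱼ)²)` and `z = zᵢ - zⱼ`, the Gaussian Fourier integral writes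
`p ^ (-d/2) * exp (-r ‖z‖² / p)`, for `r > 0`, as a positive multiple of
`∫ exp (-p ‖v‖² / (4r)) cos ⟪z, v⟫ dv`, whose integrand is positive semidefinite for every `v`
(`psd_gaussian_mixture`). Summing over the exponentials that approximate `φ` concludes.
-/

/-! ### Taylor series with nonnegative coefficients -/

open Filter Topology in
/-- Bernstein's theorem on absolutely monotone functions. The sequence `F k` consists of the
successive derivatives of `F 0` on `(-∞, a)`, given as data rather than as iterated derivatives;
nonnegativity is assumed on `[0, a)` only. -/
theorem hasSum_taylor_of_nonneg {a : ℝ} {F : ℕ → ℝ → ℝ}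
    (hF : ∀ k, ∀ s < a, HasDerivAt (F k) (F (k + 1) s) s)
    (hF0 : ∀ k, ∀ s < a, 0 ≤ s → 0 ≤ F k s) {x : ℝ} (hx0 : 0 ≤ x) (hxa : x < a) :
    HasSum (fun k : ℕ => F k 0 / k.factorial * x ^ k) (F 0 x) := by
  -- `T n y s` is the Taylor polynomial of degree `n` of `F 0` centred at `s`, evaluated at `y`;
  -- its derivative in the centre `s` telescopes to a single term.
  let T : ℕ → ℝ → ℝ → ℝ := fun n y s =>
    ∑ k ∈ Finset.range (n + 1), F k s / k.factorial * (y - s) ^ k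
  have hTself (n : ℕ) (y : ℝ) : T n y y = F 0 y := by
    simp [T, Finset.sum_range_succ']
  have hT (n : ℕ) (y s : ℝ) (hs : s < a) :
      HasDerivAt (T n y) (F (n + 1) s / n.factorial * (y - s) ^ n) s := by
    induction n with
    | zero => simpa [T] using hF 0 s hs
    | succ n ih =>
      have h1 := ((hF (n + 1) s hs).div_const ((n + 1).factorial : ℝ)).mul
        (((hasDerivAt_id s).const_sub y).pow (n + 1))
      have h2 := ih.add h1
      have he : T (n + 1) y = T n y + ((fun s => F (n + 1) s / ((n + 1).factorial : ℝ)) *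
          (fun s => y - id s) ^ (n + 1)) := by
        funext r
        simp [T, Finset.sum_range_succ _ (n + 1)]
      rw [he]
      refine h2.congr_deriv ?_
      simp only [Nat.factorial_succ, id, Pi.pow_apply, Nat.add_sub_cancel]
      push_cast
      have : (n.factorial : ℝ) ≠ 0 := by positivity
      field_simp
      ring
  -- As `T n b` increases with the centre up to `F 0 b`, and all its terms are nonnegative, each
  -- single term is at most `F 0 b`.
  have hbound (n : ℕ) (s b : ℝ) (hs : 0 ≤ s) (hsb : s ≤ b) (hb : b < a) :
      F n s / n.factorial * (b - s) ^ n ≤ F 0 b := by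
    have hmono : MonotoneOn (T n b) (Icc s b) := by
      apply monotoneOn_of_deriv_nonneg (convex_Icc s b)
      · exact fun r hr => (hT n b r (hr.2.trans_lt hb)).continuousAt.continuousWithinAt
      · intro r hr
        rw [interior_Icc] at hr
        exact (hT n b r (hr.2.trans hb)).differentiableAt.differentiableWithinAt
      · intro r hr
        rw [interior_Icc] at hr
        rw [(hT n b r (hr.2.trans hb)).deriv]
        have := hF0 (n + 1) r (hr.2.trans hb) (hs.trans hr.1.le)
        have : 0 ≤ b - r := by linarith [hr.2]
        positivity
    have h1 := hmono (left_mem_Icc.2 hsb) (right_mem_Icc.2 hsb) hsb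
    rw [hTself] at h1
    refine le_trans ?_ h1
    refine Finset.single_le_sum (f := fun k => F k s / k.factorial * (b - s) ^ k) ?_
      (Finset.self_mem_range_succ n)
    intro k _
    have := hF0 k s (hsb.trans_lt hb) hs
    have : 0 ≤ b - s := by linarith
    positivity
  rcases hx0.eq_or_lt with rfl | hx
  · convert hasSum_single (f := fun k : ℕ => F k 0 / k.factorial * (0 : ℝ) ^ k) 0 ?_ using 1
    · simp
    · intro k hk
      simp [hk]
  obtain ⟨b, hxb, hba⟩ := exists_between hxa
  have hb : 0 < b := hx.trans hxb
  rw [hasSum_iff_tendsto_nat_of_nonneg (fun k => by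
    have := hF0 k 0 (hx.trans hxa) le_rfl
    positivity)]
  rw [← tendsto_add_atTop_iff_nat 1]
  have hT0 (n : ℕ) : T n x 0 = ∑ k ∈ Finset.range (n + 1), F k 0 / k.factorial * x ^ k := by
    simp [T]
  simp_rw [← hT0]
  -- The remainder in Cauchy form, bounded using `hbound` on `[ξ, b]` with `x < b < a`. The Lagrange
  -- form would only give convergence for `x < a / 2`.
  have hrem (n : ℕ) : 0 ≤ F 0 x - T n x 0 ∧
      F 0 x - T n x 0 ≤ F 0 b * x / (b - x) * ((n + 1 : ℝ) * (x / b) ^ n) := by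
    obtain ⟨ξ, hξ, he⟩ := exists_hasDerivAt_eq_slope (T n x) _ hx
      (fun r hr => (hT n x r (hr.2.trans_lt hxa)).continuousAt.continuousWithinAt)
      (fun r hr => hT n x r (hr.2.trans hxa))
    rw [hTself, sub_zero, eq_div_iff hx.ne'] at he
    rw [← he]
    have hF1 := hF0 (n + 1) ξ (hξ.2.trans hxa) hξ.1.le
    have hxξ : 0 < x - ξ := by linarith [hξ.2]
    have hbξ : 0 < b - ξ := by linarith [hξ.2]
    refine ⟨by positivity, ?_⟩
    have h1 := hbound (n + 1) ξ b hξ.1.le (hξ.2.trans hxb).le hba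
    have hFb : 0 ≤ F 0 b := hF0 0 b hba hb.le
    have hratio : (x - ξ) / (b - ξ) ≤ x / b := by
      rw [div_le_div_iff₀ hbξ hb]
      nlinarith [hξ.1]
    have h2 : ((x - ξ) / (b - ξ)) ^ n ≤ (x / b) ^ n := by gcongr
    have h3 : F (n + 1) ξ / n.factorial * (x - ξ) ^ n * x =
        (F (n + 1) ξ / (n + 1).factorial * (b - ξ) ^ (n + 1)) * (x / (b - ξ)) *
          ((n + 1 : ℝ) * ((x - ξ) / (b - ξ)) ^ n) := by
      rw [Nat.factorial_succ, div_pow]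
      push_cast
      have : (n.factorial : ℝ) ≠ 0 := by positivity
      field_simp
      ring
    rw [h3, mul_div_assoc]
    have h4 : x / (b - ξ) ≤ x / (b - x) := by
      apply div_le_div_of_nonneg_left hx.le (by linarith) (by linarith [hξ.2])
    gcongr
  have hlim : Tendsto (fun n : ℕ => F 0 b * x / (b - x) * ((n + 1 : ℝ) * (x / b) ^ n))
      atTop (𝓝 0) := by
    have hr : x / b < 1 := (div_lt_one hb).2 hxb
    have h1 := tendsto_self_mul_const_pow_of_lt_one (by positivity : 0 ≤ x / b) hr
    have h2 := tendsto_pow_atTop_nhds_zero_of_lt_one (by positivity : 0 ≤ x / b) hr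
    have h3 := (h1.add h2).const_mul (F 0 b * x / (b - x))
    simpa [add_mul] using h3
  have h0 := squeeze_zero (fun n => (hrem n).1) (fun n => (hrem n).2) hlim
  simpa using h0.const_sub (F 0 x)

/-! ### Positive semidefinite matrices -/

open Matrix in
theorem psd_iff {m : ℕ} {M : Matrix (Fin m) (Fin m) ℝ} :
    M.PosSemidef ↔ (∀ i j, M i j = M j i) ∧
      ∀ c : Fin m → ℝ, 0 ≤ ∑ i, ∑ j, c i * c j * M i j := by
  rw [Matrix.posSemidef_iff_dotProduct_mulVec]
  have h (c : Fin m → ℝ) : star c ⬝ᵥ (M *ᵥ c) = ∑ i, ∑ j, c i * c j * M i j := by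
    simp only [dotProduct, mulVec, Finset.mul_sum]
    refine Finset.sum_congr rfl fun i _ => Finset.sum_congr rfl fun j _ => ?_
    simp; ring
  simp only [h, Matrix.IsHermitian.ext_iff]
  refine and_congr ⟨fun h i j => ?_, fun h i j => ?_⟩ Iff.rfl
  · simpa using (h j i)
  · simpa using h j i

open Filter Topology in
theorem psd_of_tendsto {m : ℕ} {α : Type*} {l : Filter α} [l.NeBot]
    {A : α → Matrix (Fin m) (Fin m) ℝ} {B : Matrix (Fin m) (Fin m) ℝ}
    (hA : ∀ᶠ n in l, (A n).PosSemidef)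
    (hlim : ∀ i j, Tendsto (fun n => A n i j) l (𝓝 (B i j))) : B.PosSemidef := by
  simp only [psd_iff] at hA ⊢
  refine ⟨fun i j => ?_, fun c => ?_⟩
  · refine tendsto_nhds_unique_of_eventuallyEq (hlim i j) (hlim j i) ?_
    filter_upwards [hA] with n hn using hn.1 i j
  · refine ge_of_tendsto (tendsto_finsetSum _ fun i _ => tendsto_finsetSum _ fun j _ =>
      (hlim i j).const_mul (c i * c j)) ?_
    filter_upwards [hA] with n hn using hn.2 c

theorem psd_of_hasSum {m : ℕ} {A : ℕ → Matrix (Fin m) (Fin m) ℝ} {B : Matrix (Fin m) (Fin m) ℝ}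
    (hA : ∀ k, (A k).PosSemidef) (hsum : ∀ i j, HasSum (fun k => A k i j) (B i j)) :
    B.PosSemidef := by
  refine psd_of_tendsto (l := Filter.atTop) (A := fun n => ∑ k ∈ Finset.range n, A k)
    (Filter.Eventually.of_forall fun n => Matrix.posSemidef_sum _ fun k _ => hA k) fun i j => ?_
  simpa [Matrix.sum_apply] using (hsum i j).tendsto_sum_nat

theorem psd_rank_one {m : ℕ} (f : Fin m → ℝ) :
    (Matrix.of fun i j => f i * f j).PosSemidef := by
  simpa [Matrix.vecMulVec, Pi.star_def] using Matrix.posSemidef_vecMulVec_self_star f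

/-- The entrywise exponential of a positive semidefinite matrix is positive semidefinite: it is a
nonnegative combination of Hadamard powers. -/
theorem psd_exp {m : ℕ} {A : Matrix (Fin m) (Fin m) ℝ} (hA : A.PosSemidef) :
    (Matrix.of fun i j => Real.exp (A i j)).PosSemidef := by
  have hpow (k : ℕ) : (Matrix.of fun i j => A i j ^ k).PosSemidef := by
    induction k with
    | zero => simpa using psd_rank_one (fun _ : Fin m => (1 : ℝ))
    | succ k ih => simpa [pow_succ, Matrix.hadamard] using ih.hadamard hA
  refine psd_of_hasSum (A := fun k => (k.factorial : ℝ)⁻¹ • Matrix.of fun i j => A i j ^ k)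
    (fun k => (hpow k).smul (by positivity)) fun i j => ?_
  have := NormedSpace.expSeries_div_hasSum_exp (A i j)
  rw [← congrFun Real.exp_eq_exp_ℝ] at this
  simpa [div_eq_inv_mul] using this

/-- The Gaussian kernel factors as `exp (-r tᵢ²) exp (-r tⱼ²) exp (2 r tᵢ tⱼ)`, the Hadamard product
of a rank-one matrix with the entrywise exponential of another. -/
theorem psd_gaussian {m : ℕ} (t : Fin m → ℝ) {r : ℝ} (hr : 0 ≤ r) :
    (Matrix.of fun i j => Real.exp (-r * (t i - t j) ^ 2)).PosSemidef := by
  have h1 := psd_exp ((psd_rank_one t).smul (by positivity : 0 ≤ 2 * r))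
  have h2 := (psd_rank_one fun i => Real.exp (-r * t i ^ 2)).hadamard h1
  have he : (Matrix.of fun i j => Real.exp (-r * (t i - t j) ^ 2)) =
      (Matrix.of fun i j => Real.exp (-r * t i ^ 2) * Real.exp (-r * t j ^ 2)).hadamard
        (Matrix.of fun i j => Real.exp (((2 * r) • Matrix.of fun i j => t i * t j) i j)) := by
    ext i j
    simp only [Matrix.of_apply, Matrix.hadamard_apply, Matrix.smul_apply, smul_eq_mul,
      ← Real.exp_add]
    ring_nf
  rw [he]
  exact h2

/-! ### The Fourier transform of a Gaussian -/

open MeasureTheory in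
/-- The Fourier transform of a Gaussian, in real form. -/
theorem integral_gaussian_cos {d : ℕ} {b : ℝ} (hb : 0 < b) (w : EuclideanSpace ℝ (Fin d)) :
    Integrable (fun v : EuclideanSpace ℝ (Fin d) =>
      Real.exp (-b * ‖v‖ ^ 2) * Real.cos (inner ℝ w v)) ∧
    ∫ v : EuclideanSpace ℝ (Fin d), Real.exp (-b * ‖v‖ ^ 2) * Real.cos (inner ℝ w v) =
      (Real.pi / b) ^ ((d : ℝ) / 2) * Real.exp (-‖w‖ ^ 2 / (4 * b)) := by
  have hb' : 0 < (b : ℂ).re := by simpa using hb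
  have hi := GaussianFourier.integrable_cexp_neg_mul_sq_norm_add hb' Complex.I w
  have he := GaussianFourier.integral_cexp_neg_mul_sq_norm_add hb' Complex.I w
  have hre (v : EuclideanSpace ℝ (Fin d)) :
      (Complex.exp (-(b : ℂ) * (‖v‖ : ℂ) ^ 2 + Complex.I * (inner ℝ w v : ℝ))).re =
      Real.exp (-b * ‖v‖ ^ 2) * Real.cos (inner ℝ w v) := by
    rw [Complex.exp_re]
    congr 2 <;> simp [← Complex.ofReal_pow]
  have hir := hi.re
  simp only [RCLike.re_to_complex, hre] at hir
  refine ⟨hir, ?_⟩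
  have h2 := congrArg Complex.re he
  rw [← RCLike.re_to_complex, ← integral_re hi] at h2
  simp only [RCLike.re_to_complex, hre] at h2
  rw [h2]
  have hc : (Real.pi / b : ℂ) ^ ((Module.finrank ℝ (EuclideanSpace ℝ (Fin d)) : ℂ) / 2) *
      Complex.exp (Complex.I ^ 2 * (‖w‖ : ℂ) ^ 2 / (4 * b)) =
      (((Real.pi / b) ^ ((d : ℝ) / 2) * Real.exp (-‖w‖ ^ 2 / (4 * b)) : ℝ) : ℂ) := by
    rw [Complex.ofReal_mul, Complex.ofReal_cpow (by positivity)]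
    simp
  rw [hc, Complex.ofReal_re]

/-! ### Completely monotone functions as limits of sums of exponentials -/

theorem hasDerivAt_iteratedDerivWithin_Ioi {f : ℝ → ℝ} (hf : ContDiffOn ℝ (⊤ : ℕ∞) f (Ioi 0))
    (k : ℕ) {u : ℝ} (hu : 0 < u) :
    HasDerivAt (iteratedDerivWithin k f (Ioi 0)) (iteratedDerivWithin (k + 1) f (Ioi 0) u) u := by
  have h1 : DifferentiableOn ℝ (iteratedDerivWithin k f (Ioi 0)) (Ioi 0) :=
    hf.differentiableOn_iteratedDerivWithin (by exact_mod_cast WithTop.coe_lt_top k)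
      (uniqueDiffOn_Ioi 0)
  rw [iteratedDerivWithin_succ, derivWithin_of_isOpen isOpen_Ioi hu]
  exact (h1.differentiableAt (Ioi_mem_nhds hu)).hasDerivAt

/-- The functions `y ↦ (-1) ^ k * f⁽ᵏ⁾ (a - y)` are the successive derivatives of `y ↦ f (a - y)`. -/
theorem hasDerivAt_reflect {f : ℝ → ℝ} (hf : ContDiffOn ℝ (⊤ : ℕ∞) f (Ioi 0))
    (a : ℝ) (k : ℕ) {s : ℝ} (hs : s < a) :
    HasDerivAt (fun y => (-1 : ℝ) ^ k * iteratedDerivWithin k f (Ioi 0) (a - y))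
      ((-1 : ℝ) ^ (k + 1) * iteratedDerivWithin (k + 1) f (Ioi 0) (a - s)) s := by
  have h1 := (hasDerivAt_iteratedDerivWithin_Ioi hf k (sub_pos.2 hs)).comp s
    ((hasDerivAt_id s).const_sub a)
  have h2 := h1.const_mul ((-1 : ℝ) ^ k)
  exact h2.congr_deriv (by ring)

/-- The distance below `N` at which functions are evaluated in the exponential approximation:
`N - gap N u` tends to `u` as `N → ∞`, and powers of `gap N u` are exponentials in `u`. The shift
`1 / N` keeps `N - gap N u` positive even at `u = 0`, where differentiability is not available. -/
noncomputable def gap (N u : ℝ) : ℝ := N * Real.exp (-(u + 1 / N) / N)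

theorem gap_pos {N u : ℝ} (hN : 0 < N) : 0 < gap N u := by
  unfold gap; positivity

theorem gap_lt {N u : ℝ} (hN : 0 < N) (hu : 0 ≤ u) : gap N u < N := by
  unfold gap
  have : Real.exp (-(u + 1 / N) / N) < 1 := by
    rw [Real.exp_lt_one_iff]
    apply div_neg_of_neg_of_pos _ hN
    have : 0 < 1 / N := by positivity
    linarith
  nlinarith

open Filter Topology in
theorem tendsto_sub_gap {u : ℝ} (hu : 0 ≤ u) :
    Tendsto (fun n : ℕ => ((n : ℝ) + 1) - gap (n + 1) u) atTop (𝓝 u) := by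
  have hh : Tendsto (fun n : ℕ => 1 / ((n : ℝ) + 1)) atTop (𝓝 0) :=
    tendsto_one_div_add_atTop_nhds_zero_nat
  have hup : Tendsto (fun n : ℕ => u + 1 / ((n : ℝ) + 1)) atTop (𝓝 u) := by
    simpa using hh.const_add u
  have hlo : Tendsto (fun n : ℕ => (u + 1 / ((n : ℝ) + 1)) -
      (u + 1 / ((n : ℝ) + 1)) ^ 2 * (1 / ((n : ℝ) + 1))) atTop (𝓝 u) := by
    simpa using hup.sub ((hup.pow 2).mul hh)
  refine tendsto_of_tendsto_of_tendsto_of_le_of_le hlo hup (fun n => ?_) (fun n => ?_)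
  · have hN : (0 : ℝ) < n + 1 := by positivity
    simp only [gap]
    set N : ℝ := n + 1
    set y := (u + 1 / N) / N with hy
    have hy0 : 0 ≤ y := by positivity
    have e1 : Real.exp (-y) ≤ 1 - y + y ^ 2 := by
      rw [Real.exp_neg]
      refine (inv_anti₀ (by positivity) (Real.add_one_le_exp y)).trans ?_
      rw [inv_le_iff_one_le_mul₀ (by positivity)]
      nlinarith [pow_nonneg hy0 3]
    have e2 : u + 1 / N = N * y := by rw [hy]; field_simp
    rw [neg_div, ← hy, e2]
    have e3 : (N * y) ^ 2 * (1 / N) = N * y ^ 2 := by field_simp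
    rw [e3]
    nlinarith
  · have hN : (0 : ℝ) < n + 1 := by positivity
    simp only [gap]
    set N : ℝ := n + 1
    set y := (u + 1 / N) / N with hy
    have e2 : u + 1 / N = N * y := by rw [hy]; field_simp
    rw [neg_div, ← hy, e2]
    nlinarith [Real.add_one_le_exp (-y)]

/-- The coefficients and rates do not depend on `u`: this is the Taylor series at `gap N u`, using
`gap N u = gap N 0 * exp (-u / N)`. -/
theorem hasSum_exp_of_tower {N : ℝ} (hN : 0 < N) {F : ℕ → ℝ → ℝ}
    (hF : ∀ k, ∀ s < N, HasDerivAt (F k) (F (k + 1) s) s)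
    (hF0 : ∀ k, ∀ s < N, 0 ≤ s → 0 ≤ F k s) :
    ∃ c r : ℕ → ℝ, (∀ k, 0 ≤ c k) ∧ (∀ k, 0 ≤ r k) ∧ ∀ u, 0 ≤ u →
      HasSum (fun k => c k * Real.exp (-r k * u)) (F 0 (gap N u)) := by
  refine ⟨fun k => F k 0 / k.factorial * gap N 0 ^ k, fun k => k / N, fun k => ?_, fun k => ?_,
    fun u hu => ?_⟩
  · have := hF0 k 0 hN le_rfl
    have := gap_pos (u := 0) hN
    positivity
  · positivity
  · convert hasSum_taylor_of_nonneg hF hF0 (gap_pos hN).le (gap_lt hN hu) using 2 with k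
    have h : gap N u = gap N 0 * Real.exp (-(u / N)) := by
      unfold gap
      rw [mul_assoc, ← Real.exp_add]
      congr 2
      ring
    rw [h, mul_pow, ← Real.exp_nat_mul]
    ring_nf

theorem hasSum_exp_of_cm {φ : ℝ → ℝ} (hφsmooth : ContDiffOn ℝ (⊤ : ℕ∞) φ (Ioi 0))
    (hφcm : ∀ n : ℕ, ∀ u : ℝ, 0 < u →
      0 ≤ (-1 : ℝ) ^ n * iteratedDerivWithin n φ (Ioi 0) u) {N : ℝ} (hN : 0 < N) :
    ∃ c r : ℕ → ℝ, (∀ k, 0 ≤ c k) ∧ (∀ k, 0 ≤ r k) ∧ ∀ u, 0 ≤ u →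
      HasSum (fun k => c k * Real.exp (-r k * u)) (φ (N - gap N u)) := by
  obtain ⟨c, r, hc, hr, h⟩ := hasSum_exp_of_tower hN
    (F := fun k y => (-1 : ℝ) ^ k * iteratedDerivWithin k φ (Ioi 0) (N - y))
    (fun k s hs => hasDerivAt_reflect hφsmooth N k hs)
    (fun k s hs _ => hφcm k _ (sub_pos.2 hs))
  exact ⟨c, r, hc, hr, fun u hu => by simpa using h u hu⟩

theorem hasSum_exp_of_bernstein {ψ : ℝ → ℝ}
    (hψdiff : DifferentiableOn ℝ ψ (Ioi 0))
    (hψ'smooth : ContDiffOn ℝ (⊤ : ℕ∞) (deriv ψ) (Ioi 0))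
    (hψ'cm : ∀ n : ℕ, ∀ u : ℝ, 0 < u →
      0 ≤ (-1 : ℝ) ^ n * iteratedDerivWithin n (deriv ψ) (Ioi 0) u) {N : ℝ} (hN : 0 < N) :
    ∃ c r : ℕ → ℝ, (∀ k, 0 ≤ c k) ∧ (∀ k, 0 ≤ r k) ∧ ∀ u, 0 ≤ u →
      HasSum (fun k => c k * Real.exp (-r k * u)) (ψ N - ψ (N - gap N u)) := by
  have hmono : MonotoneOn ψ (Ioi 0) := by
    refine monotoneOn_of_deriv_nonneg (convex_Ioi 0) hψdiff.continuousOn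
      (by rwa [interior_Ioi]) fun u hu => ?_
    rw [interior_Ioi] at hu
    simpa using hψ'cm 0 u hu
  let F : ℕ → ℝ → ℝ
    | 0 => fun y => ψ N - ψ (N - y)
    | k + 1 => fun y => (-1 : ℝ) ^ k * iteratedDerivWithin k (deriv ψ) (Ioi 0) (N - y)
  refine hasSum_exp_of_tower hN (F := F) ?_ ?_
  · rintro (_ | k) s hs
    · have h1 := (hψdiff.differentiableAt (Ioi_mem_nhds (sub_pos.2 hs))).hasDerivAt.comp s
        ((hasDerivAt_id s).const_sub N)
      exact (h1.const_sub (ψ N)).congr_deriv (by simp [F])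
    · exact hasDerivAt_reflect hψ'smooth N k hs
  · rintro (_ | k) s hs hs0
    · exact sub_nonneg.2 (hmono (sub_pos.2 hs) hN (by linarith))
    · exact hψ'cm k _ (sub_pos.2 hs)

open Filter Topology in
theorem tendsto_comp_sub_gap {f : ℝ → ℝ} (hf : ContinuousOn f (Ici 0)) {u : ℝ} (hu : 0 ≤ u) :
    Tendsto (fun n : ℕ => f (((n : ℝ) + 1) - gap (n + 1) u)) atTop (𝓝 (f u)) := by
  refine (hf u hu).tendsto.comp (tendsto_nhdsWithin_iff.2 ⟨tendsto_sub_gap hu, ?_⟩)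
  exact Eventually.of_forall fun n => sub_nonneg.2 (gap_lt (by positivity) hu).le

/-! ### Exponentials of Bernstein functions and Gaussian mixtures -/

/-- With `a := ψ N - ψ (N - gap N u)` positive semidefinite, `exp (-s ψ (N - gap N u))` is the
constant `exp (-s ψ N)` times the entrywise exponential of `s a`; then `N → ∞`. -/
theorem psd_exp_neg_bernstein {ψ : ℝ → ℝ}
    (hψcont : ContinuousOn ψ (Ici 0))
    (hψdiff : DifferentiableOn ℝ ψ (Ioi 0))
    (hψ'smooth : ContDiffOn ℝ (⊤ : ℕ∞) (deriv ψ) (Ioi 0))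
    (hψ'cm : ∀ n : ℕ, ∀ u : ℝ, 0 < u →
      0 ≤ (-1 : ℝ) ^ n * iteratedDerivWithin n (deriv ψ) (Ioi 0) u)
    {m : ℕ} (t : Fin m → ℝ) {s : ℝ} (hs : 0 ≤ s) :
    (Matrix.of fun i j => Real.exp (-s * ψ ((t i - t j) ^ 2))).PosSemidef := by
  refine psd_of_tendsto (l := Filter.atTop) (A := fun n : ℕ => Matrix.of fun i j =>
    Real.exp (-s * ψ (((n : ℝ) + 1) - gap (n + 1) ((t i - t j) ^ 2))))
    (Filter.Eventually.of_forall fun n => ?_) fun i j => ?_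
  · have hN : (0 : ℝ) < n + 1 := by positivity
    obtain ⟨c, r, hc, hr, h⟩ := hasSum_exp_of_bernstein hψdiff hψ'smooth hψ'cm hN
    have hA : (Matrix.of fun i j : Fin m => ψ ((n : ℝ) + 1) -
        ψ (((n : ℝ) + 1) - gap (n + 1) ((t i - t j) ^ 2))).PosSemidef :=
      psd_of_hasSum (fun k => (psd_gaussian t (hr k)).smul (hc k)) fun i j => by
        simpa using h ((t i - t j) ^ 2) (sq_nonneg _)
    have hE := (psd_exp (hA.smul hs)).smul (Real.exp_pos (-s * ψ ((n : ℝ) + 1))).le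
    have he : (Matrix.of fun i j : Fin m =>
        Real.exp (-s * ψ (((n : ℝ) + 1) - gap (n + 1) ((t i - t j) ^ 2)))) =
        Real.exp (-s * ψ ((n : ℝ) + 1)) • Matrix.of fun i j => Real.exp ((s • Matrix.of
          fun i j : Fin m => ψ ((n : ℝ) + 1) -
            ψ (((n : ℝ) + 1) - gap (n + 1) ((t i - t j) ^ 2))) i j) := by
      ext i j
      simp only [Matrix.of_apply, Matrix.smul_apply, smul_eq_mul, ← Real.exp_add]
      ring_nf
    rw [he]
    exact hE
  · exact (Real.continuous_exp.tendsto _).comp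
      ((tendsto_comp_sub_gap hψcont (sq_nonneg _)).const_mul (-s))

open MeasureTheory in
/-- The Gaussian Fourier integral with parameter `p i j / (4 r)` expresses the `(i, j)` entry as a
positive multiple of an integral over frequencies `v`, in which the factor `cos ⟪zᵢ - zⱼ, v⟫` splits
as `cos ⟪zᵢ, v⟫ cos ⟪zⱼ, v⟫ + sin ⟪zᵢ, v⟫ sin ⟪zⱼ, v⟫`. -/
theorem psd_gaussian_mixture {d m : ℕ} {p : Fin m → Fin m → ℝ} (hp : ∀ i j, 0 < p i j)
    (hpsd : ∀ s : ℝ, 0 ≤ s → (Matrix.of fun i j => Real.exp (-s * p i j)).PosSemidef)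
    (z : Fin m → EuclideanSpace ℝ (Fin d)) {r : ℝ} (hr : 0 < r) :
    (Matrix.of fun i j => p i j ^ (-(d : ℝ) / 2) *
      Real.exp (-r * (‖z i - z j‖ ^ 2 / p i j))).PosSemidef := by
  have hsymm (i j) : p i j = p j i := by
    simpa using (psd_iff.1 (hpsd 1 zero_le_one)).1 i j
  rw [psd_iff]
  refine ⟨fun i j => by simp only [Matrix.of_apply, hsymm i j, norm_sub_rev (z i)], fun c => ?_⟩
  have hb (i j) : 0 < p i j / (4 * r) := by have := hp i j; positivity
  have hK (i j) : p i j ^ (-(d : ℝ) / 2) * Real.exp (-r * (‖z i - z j‖ ^ 2 / p i j)) =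
      (4 * r * Real.pi) ^ (-(d : ℝ) / 2) * ∫ v : EuclideanSpace ℝ (Fin d),
        Real.exp (-(p i j / (4 * r)) * ‖v‖ ^ 2) * Real.cos (inner ℝ (z i - z j) v) := by
    rw [(integral_gaussian_cos (hb i j) _).2]
    have hpi := Real.pi_pos
    have hpij := hp i j
    have e1 : Real.pi / (p i j / (4 * r)) = (4 * r * Real.pi) * (p i j)⁻¹ := by field_simp
    have e2 : -‖z i - z j‖ ^ 2 / (4 * (p i j / (4 * r))) = -r * (‖z i - z j‖ ^ 2 / p i j) := by
      field_simp
    rw [e1, e2, Real.mul_rpow (x := 4 * r * Real.pi) (by positivity) (by positivity),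
      Real.inv_rpow hpij.le, ← Real.rpow_neg hpij.le, ← mul_assoc, ← mul_assoc,
      ← Real.rpow_add (by positivity)]
    simp [neg_div]
  have hint (i j) := (integral_gaussian_cos (hb i j) (z i - z j)).1
  simp only [Matrix.of_apply, hK]
  have hsum : ∑ i, ∑ j, c i * c j * ((4 * r * Real.pi) ^ (-(d : ℝ) / 2) *
      ∫ v : EuclideanSpace ℝ (Fin d),
        Real.exp (-(p i j / (4 * r)) * ‖v‖ ^ 2) * Real.cos (inner ℝ (z i - z j) v)) =
      (4 * r * Real.pi) ^ (-(d : ℝ) / 2) * ∫ v : EuclideanSpace ℝ (Fin d), ∑ i, ∑ j,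
        c i * c j * (Real.exp (-(p i j / (4 * r)) * ‖v‖ ^ 2) *
          Real.cos (inner ℝ (z i - z j) v)) := by
    rw [integral_finsetSum _ fun i _ => integrable_finsetSum _ fun j _ => (hint i j).const_mul _,
      Finset.mul_sum]
    refine Finset.sum_congr rfl fun i _ => ?_
    rw [integral_finsetSum _ fun j _ => (hint i j).const_mul _, Finset.mul_sum]
    refine Finset.sum_congr rfl fun j _ => ?_
    rw [integral_const_mul]
    ring
  rw [hsum]
  refine mul_nonneg (by positivity) (integral_nonneg fun v => ?_)
  have h1 := (psd_iff.1 (hpsd (‖v‖ ^ 2 / (4 * r)) (by positivity))).2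
  have hc := h1 fun i => c i * Real.cos (inner ℝ (z i) v)
  have hs := h1 fun i => c i * Real.sin (inner ℝ (z i) v)
  refine (add_nonneg hc hs).trans_eq ?_
  simp only [← Finset.sum_add_distrib]
  refine Finset.sum_congr rfl fun i _ => Finset.sum_congr rfl fun j _ => ?_
  rw [inner_sub_left, Real.cos_sub, Matrix.of_apply,
    show -(p i j / (4 * r)) * ‖v‖ ^ 2 = -(‖v‖ ^ 2 / (4 * r)) * p i j by ring]
  ring

/-- The rate `r = 0` occurs as the constant Taylor term; it is the limit of positive rates. -/
theorem psd_gaussian_mixture_of_nonneg {d m : ℕ} {p : Fin m → Fin m → ℝ}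
    (hp : ∀ i j, 0 < p i j)
    (hpsd : ∀ s : ℝ, 0 ≤ s → (Matrix.of fun i j => Real.exp (-s * p i j)).PosSemidef)
    (z : Fin m → EuclideanSpace ℝ (Fin d)) {r : ℝ} (hr : 0 ≤ r) :
    (Matrix.of fun i j => p i j ^ (-(d : ℝ) / 2) *
      Real.exp (-r * (‖z i - z j‖ ^ 2 / p i j))).PosSemidef := by
  refine psd_of_tendsto (l := nhdsWithin r (Ioi r)) (A := fun ρ => Matrix.of fun i j =>
    p i j ^ (-(d : ℝ) / 2) * Real.exp (-ρ * (‖z i - z j‖ ^ 2 / p i j))) ?_ fun i j => ?_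
  · filter_upwards [self_mem_nhdsWithin] with ρ hρ
    exact psd_gaussian_mixture hp hpsd z (hr.trans_lt hρ)
  · have : Continuous fun ρ : ℝ =>
        p i j ^ (-(d : ℝ) / 2) * Real.exp (-ρ * (‖z i - z j‖ ^ 2 / p i j)) := by fun_prop
    exact (this.tendsto r).mono_left nhdsWithin_le_nhds

/-! ### Validity of the Gneiting class -/

/-- Validity of the Gneiting class: if `φ` is continuous on `[0,∞)` and
completely monotone on `(0,∞)`, and `ψ` is strictly positive and continuous on `[0,∞)`,
differentiable on `(0,∞)` with completely monotone derivative, then the spatiotemporal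
kernel `C(z,τ) = σ² ψ(τ²)^{-d/2} φ(‖z‖²/ψ(τ²))` is positive semidefinite on `ℝᵈ × ℝ`. -/
theorem gneiting_class_positive_semidefinite
    (d : ℕ) (hd : 1 ≤ d) (σ2 : ℝ) (hσ2 : 0 ≤ σ2)
    (φ ψ : ℝ → ℝ)
    (hφcont : ContinuousOn φ (Ici 0))
    (hφsmooth : ContDiffOn ℝ (⊤ : ℕ∞) φ (Ioi 0))
    (hφcm : ∀ n : ℕ, ∀ u : ℝ, 0 < u →
      0 ≤ (-1 : ℝ) ^ n * iteratedDerivWithin n φ (Ioi 0) u)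
    (hψpos : ∀ u : ℝ, 0 ≤ u → 0 < ψ u)
    (hψcont : ContinuousOn ψ (Ici 0))
    (hψdiff : DifferentiableOn ℝ ψ (Ioi 0))
    (hψ'smooth : ContDiffOn ℝ (⊤ : ℕ∞) (deriv ψ) (Ioi 0))
    (hψ'cm : ∀ n : ℕ, ∀ u : ℝ, 0 < u →
      0 ≤ (-1 : ℝ) ^ n * iteratedDerivWithin n (deriv ψ) (Ioi 0) u) :
    ∀ (m : ℕ) (z : Fin m → EuclideanSpace ℝ (Fin d)) (t : Fin m → ℝ) (c : Fin m → ℝ),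
      0 ≤ ∑ i : Fin m, ∑ j : Fin m, c i * c j *
        (σ2 * ψ ((t i - t j) ^ 2) ^ (-(d : ℝ) / 2) *
          φ (‖z i - z j‖ ^ 2 / ψ ((t i - t j) ^ 2))) := by
  intro m z t c
  have hp (i j : Fin m) : 0 < ψ ((t i - t j) ^ 2) := hψpos _ (sq_nonneg _)
  have hu (i j : Fin m) : 0 ≤ ‖z i - z j‖ ^ 2 / ψ ((t i - t j) ^ 2) := by
    have := hp i j
    positivity
  have hpsd (s : ℝ) (hs : 0 ≤ s) :
      (Matrix.of fun i j => Real.exp (-s * ψ ((t i - t j) ^ 2))).PosSemidef :=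
    psd_exp_neg_bernstein hψcont hψdiff hψ'smooth hψ'cm t hs
  have hK : (Matrix.of fun i j => ψ ((t i - t j) ^ 2) ^ (-(d : ℝ) / 2) *
      φ (‖z i - z j‖ ^ 2 / ψ ((t i - t j) ^ 2))).PosSemidef := by
    refine psd_of_tendsto (l := Filter.atTop) (A := fun n : ℕ => Matrix.of fun i j =>
      ψ ((t i - t j) ^ 2) ^ (-(d : ℝ) / 2) *
        φ (((n : ℝ) + 1) - gap (n + 1) (‖z i - z j‖ ^ 2 / ψ ((t i - t j) ^ 2))))
      (Filter.Eventually.of_forall fun n => ?_)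
      fun i j => (tendsto_comp_sub_gap hφcont (hu i j)).const_mul _
    obtain ⟨a, r, ha, hr, h⟩ :=
      hasSum_exp_of_cm hφsmooth hφcm (by positivity : (0 : ℝ) < n + 1)
    refine psd_of_hasSum
      (fun k => (psd_gaussian_mixture_of_nonneg hp hpsd z (hr k)).smul (ha k)) fun i j => ?_
    have := (h _ (hu i j)).mul_left (ψ ((t i - t j) ^ 2) ^ (-(d : ℝ) / 2))
    simpa [mul_left_comm] using this
  have := (psd_iff.1 (hK.smul hσ2)).2 c
  simpa [mul_assoc] using this
end
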